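/- Let Q be a quantity space over a scalar system K. If q ~ q' and q is invertible, then there exists λ ∈ K with q' = λ•q; if moreover q' is also invertible, then λ ≠ 0. -/

import Mathlib

/-!
Expand `q = μ • B` and `q' = ν • B'` in a basis, where `B`, `B'` are products of powers of basis
elements. From `α • q = β • q'` the two expansions `(α μ) • B = (β ν) • B'` agree, so uniqueness of
exponents gives `B = B'`. If `q` is invertible then `μ ≠ 0`, because a quantity `0 • x` is never
invertible (`ScalableMonoid.not_isUnit_smul_zero`); hence `q' = (ν / μ) • q`. The same lemma shows
that `ν / μ ≠ 0` when `q'` is invertible.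
-/

/-- A *scalable (commutative) monoid* over a scalar system `K ⊆ F`:
`K` is a subset of the field `F` closed under addition, containing `1`,
closed under multiplication and under inverses of nonzero elements
(so the nonzero elements of `K` form a group under multiplication),
together with a scalar multiplication `smul` satisfying the axioms
`1 • q = q`, `α • (β • q) = (α β) • q` and `α • (q * q') = (α • q) * q'`
for scalars in `K`. -/
structure ScalableMonoid (F : Type*) [Field F] (Q : Type*) [CommMonoid Q] where
  K : Set F
  one_mem : (1 : F) ∈ K
  add_mem : ∀ {a b : F}, a ∈ K → b ∈ K → a + b ∈ K
  mul_mem : ∀ {a b : F}, a ∈ K → b ∈ K → a * b ∈ K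
  inv_mem : ∀ {a : F}, a ∈ K → a ≠ 0 → a⁻¹ ∈ K
  smul : F → Q → Q
  smul_one : ∀ q : Q, smul 1 q = q
  smul_smul : ∀ {a b : F}, a ∈ K → b ∈ K → ∀ q : Q, smul a (smul b q) = smul (a * b) q
  smul_mul : ∀ {a : F}, a ∈ K → ∀ q q' : Q, smul a (q * q') = smul a q * q'

/-- `b : Fin n → Qˣ` (a list of invertible quantities) is a basis for the scalable
monoid `M` if every quantity has a unique expansion `q = μ • ∏ i, b i ^ k i`
with `μ ∈ K` and integer exponents `k`. -/
def ScalableMonoid.IsBasis {F : Type*} [Field F] {Q : Type*} [CommMonoid Q]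
    (M : ScalableMonoid F Q) {n : ℕ} (b : Fin n → Qˣ) : Prop :=
  ∀ q : Q, ∃! p : M.K × (Fin n → ℤ),
    q = M.smul (p.1 : F) (↑(∏ i, b i ^ p.2 i) : Q)

/-- A quantity space is a scalable monoid having a (finite) basis. -/
def ScalableMonoid.IsQuantitySpace {F : Type*} [Field F] {Q : Type*} [CommMonoid Q]
    (M : ScalableMonoid F Q) : Prop :=
  ∃ (n : ℕ) (b : Fin n → Qˣ), M.IsBasis b

/-- The measure `μ_B(q)`: the unique scalar in the expansion of `q` relative to
the basis `B`. -/
noncomputable def ScalableMonoid.measure {F : Type*} [Field F] {Q : Type*} [CommMonoid Q]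
    (M : ScalableMonoid F Q) {n : ℕ} {b : Fin n → Qˣ} (hB : M.IsBasis b) (q : Q) : F :=
  ((hB q).choose.1 : F)

/-- Quantities `q, q'` are equidimensional (`q ~ q'`) if `α • q = β • q'`
for some scalars `α, β ∈ K`. -/
def ScalableMonoid.Equidim {F : Type*} [Field F] {Q : Type*} [CommMonoid Q]
    (M : ScalableMonoid F Q) (q q' : Q) : Prop :=
  ∃ α β : F, α ∈ M.K ∧ β ∈ M.K ∧ M.smul α q = M.smul β q'

/-- If `0 • x` were invertible with inverse `y`, then `1 = 0 • (x * y)`, hence `0 • 1 = 1 = 1 • 1`: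
two expansions of `1` with distinct scalars. -/
theorem ScalableMonoid.not_isUnit_smul_zero {F : Type*} [Field F] {Q : Type*} [CommMonoid Q]
    (M : ScalableMonoid F Q) (hQS : M.IsQuantitySpace) (h0 : (0 : F) ∈ M.K) (x : Q) :
    ¬ IsUnit (M.smul 0 x) := by
  intro hx
  obtain ⟨n, b, hb⟩ := hQS
  obtain ⟨y, hy⟩ := hx.exists_right_inv
  rw [← M.smul_mul h0] at hy
  have h01 : M.smul 0 1 = 1 := by
    have h := M.smul_smul h0 h0 (x * y)
    rwa [mul_zero, hy] at h
  have e := (hb 1).unique (y₁ := (⟨0, h0⟩, 0)) (y₂ := (⟨1, M.one_mem⟩, 0))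
    (by simp [h01]) (by simp [M.smul_one])
  simp at e

/-- if `q ~ q'` and `q` is invertible, then `q' = λ•q` for some
`λ ∈ K`; and if `q'` is also invertible, then `λ ≠ 0`. -/
theorem equidim_exists_smul_eq {F : Type*} [Field F] {Q : Type*} [CommMonoid Q]
    (M : ScalableMonoid F Q) (hQS : M.IsQuantitySpace)
    (q q' : Q) (h : M.Equidim q q') (hq : IsUnit q) :
    ∃ lam : F, lam ∈ M.K ∧ q' = M.smul lam q ∧ (IsUnit q' → lam ≠ 0) := by
  have hzero := M.not_isUnit_smul_zero hQS
  obtain ⟨n, b, hb⟩ := hQS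
  obtain ⟨α, β, hα, hβ, hab⟩ := h
  obtain ⟨⟨⟨μ, hμ⟩, k⟩, hk, -⟩ := hb q
  obtain ⟨⟨⟨ν, hν⟩, l⟩, hl, -⟩ := hb q'
  dsimp only at hk hl
  have hkl : k = l := by
    have e := (hb (M.smul α q)).unique
      (y₁ := (⟨α * μ, M.mul_mem hα hμ⟩, k)) (y₂ := (⟨β * ν, M.mul_mem hβ hν⟩, l))
      (by rw [hk, M.smul_smul hα hμ]) (by rw [hab, hl, M.smul_smul hβ hν])
    exact congrArg Prod.snd e
  subst hkl
  have hμ0 : μ ≠ 0 := by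
    rintro rfl
    exact hzero hμ _ (hk ▸ hq)
  have hlam : ν * μ⁻¹ ∈ M.K := M.mul_mem hν (M.inv_mem hμ hμ0)
  have hq' : q' = M.smul (ν * μ⁻¹) q := by
    rw [hk, M.smul_smul hlam hμ, inv_mul_cancel_right₀ hμ0]
    exact hl
  refine ⟨ν * μ⁻¹, hlam, hq', fun hu h0 => ?_⟩
  rw [h0] at hlam hq'
  exact hzero hlam q (hq' ▸ hu)
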